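/- arXiv:2512.05040 — 7 statements merged into one kernel-verified Lean document; each statement's English description precedes it below -/
import Mathlib

section
/- Let m ≥ 2 and let (s_{ij})_{0≤i,j≤m−1} be a symmetric real matrix with s_{ii} = 0 and s_{ij} ≥ 0 for all i, j. Define the (m−1)×(m−1) matrix G by g_{ij} = (s_{0i} + s_{0j} − s_{ij})/2 for 1 ≤ i, j ≤ m−1. Then there exist points p₀ = 0, p₁, …, p_{m−1} in ℝ^{m−1} with ‖p_i − p_j‖² = s_{ij} for all 0 ≤ i, j ≤ m−1 if and only if G is positive semidefinite. Moreover, in that case the dimension of the linear span of p₁, …, p_{m−1} equals the rank of G, and the realisation is unique up to an orthogonal transformation: if q₀ = 0, q₁, …, q_{m−1} ∈ ℝ^{m−1} also satisfy ‖q_i − q_j‖² = s_{ij} for all i, j, then there is an orthogonal linear map h of ℝ^{m−1} with h(p_i) = q_i for all i. -/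
/-!
By polarisation, points `p₀ = 0, p₁, …, p_n` realise the squared distances `s` exactly when `G` is
the Gram matrix of `p₁, …, p_n` (`eq_gram_of_realises`, `realises_of_eq_gram`). Everything
then reduces to facts about Gram matrices: they are the positive semidefinite matrices
(`exists_eq_gram`, via a factorisation `G = Bᵀ B`), their rank is the dimension of the span of
the vectors (`finrank_span_eq_rank_gram`, via `rank (P Pᵀ) = rank P`), and they determine the
vectors up to a linear isometry (`exists_isometry_of_gram_eq`): equal Gram matrices mean that
`‖∑ cᵢ vᵢ‖ = ‖∑ cᵢ wᵢ‖` for all coefficients, so `vᵢ ↦ wᵢ` is a well-defined isometry of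
`span v` into the ambient space, and it extends to the whole finite-dimensional space.
-/

open Matrix

lemma eq_gram_of_realises {n : ℕ} {E : Type*} [NormedAddCommGroup E] [InnerProductSpace ℝ E]
    {s : Fin (n + 1) → Fin (n + 1) → ℝ} {G : Matrix (Fin n) (Fin n) ℝ}
    (hG : ∀ i j, G i j = (s 0 i.succ + s 0 j.succ - s i.succ j.succ) / 2)
    {p : Fin (n + 1) → E} (h0 : p 0 = 0) (hp : ∀ i j, ‖p i - p j‖ ^ 2 = s i j) :
    G = gram ℝ (fun i : Fin n => p i.succ) := by
  ext i j
  rw [hG, gram_apply, ← hp, ← hp, ← hp, h0, zero_sub, zero_sub, norm_neg, norm_neg,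
    norm_sub_sq_real]
  ring

lemma realises_of_eq_gram {n : ℕ} {E : Type*} [NormedAddCommGroup E] [InnerProductSpace ℝ E]
    {s : Fin (n + 1) → Fin (n + 1) → ℝ}
    (hsymm : ∀ i j, s i j = s j i) (hdiag : ∀ i, s i i = 0)
    {G : Matrix (Fin n) (Fin n) ℝ}
    (hG : ∀ i j, G i j = (s 0 i.succ + s 0 j.succ - s i.succ j.succ) / 2)
    {v : Fin n → E} (hv : G = gram ℝ v) (i j : Fin (n + 1)) :
    ‖(Fin.cons 0 v : Fin (n + 1) → E) i - (Fin.cons 0 v : Fin (n + 1) → E) j‖ ^ 2 = s i j := by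
  have hin (i j : Fin n) :
      inner ℝ (v i) (v j) = (s 0 i.succ + s 0 j.succ - s i.succ j.succ) / 2 := by
    rw [← hG, hv, gram_apply]
  have hnorm (i : Fin n) : ‖v i‖ ^ 2 = s 0 i.succ := by
    rw [← real_inner_self_eq_norm_sq, hin, hdiag]
    ring
  cases i using Fin.cases with
  | zero =>
    cases j using Fin.cases with
    | zero => simp [hdiag]
    | succ j => simp [hnorm]
  | succ i =>
    cases j using Fin.cases with
    | zero => simp [hnorm, hsymm i.succ 0]
    | succ j =>
      simp only [Fin.cons_succ, norm_sub_sq_real, hnorm, hin]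
      ring

open scoped MatrixOrder in
/-- A positive semidefinite matrix is the Gram matrix of the columns of `B`, where `G = Bᵀ B`. -/
lemma exists_eq_gram {n : ℕ} {G : Matrix (Fin n) (Fin n) ℝ} (h : G.PosSemidef) :
    ∃ v : Fin n → EuclideanSpace ℝ (Fin n), G = gram ℝ v := by
  obtain ⟨B, rfl⟩ := CStarAlgebra.nonneg_iff_eq_star_mul_self.mp h.nonneg
  refine ⟨fun i => WithLp.toLp 2 (B.col i), ?_⟩
  ext i j
  simp [gram_apply, PiLp.inner_apply, Matrix.mul_apply, star_eq_conjTranspose, mul_comm]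

lemma finrank_span_eq_rank_gram {n k : ℕ} (v : Fin n → EuclideanSpace ℝ (Fin k)) :
    Module.finrank ℝ (Submodule.span ℝ (Set.range v)) = (gram ℝ v).rank := by
  let P : Matrix (Fin n) (Fin k) ℝ := Matrix.of fun i => (v i).ofLp
  have hP : gram ℝ v = P * Pᵀ := by
    ext i j
    simp [P, gram_apply, PiLp.inner_apply, Matrix.mul_apply, mul_comm]
  -- The span of the rows of `P` is the span of `v` with the Euclidean norm forgotten.
  have hmap : Submodule.span ℝ (Set.range P.row) =
      (Submodule.span ℝ (Set.range v)).map
        (WithLp.linearEquiv 2 ℝ (Fin k → ℝ)).toLinearMap := by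
    rw [Submodule.map_span, ← Set.range_comp]
    rfl
  rw [hP, rank_self_mul_transpose, rank_eq_finrank_span_row, hmap]
  exact (LinearEquiv.finrank_map_eq (WithLp.linearEquiv 2 ℝ (Fin k → ℝ)) _).symm

lemma exists_isometry_of_gram_eq {n : ℕ} {E : Type*} [NormedAddCommGroup E]
    [InnerProductSpace ℝ E] [FiniteDimensional ℝ E] {v w : Fin n → E}
    (h : gram ℝ v = gram ℝ w) : ∃ f : E ≃ₗᵢ[ℝ] E, ∀ i, f (v i) = w i := by
  let S := Fintype.linearCombination ℝ v
  let T := Fintype.linearCombination ℝ w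
  have hnorm (c : Fin n → ℝ) : ‖T c‖ = ‖S c‖ := by
    have hsq : ‖T c‖ ^ 2 = ‖S c‖ ^ 2 := by
      rw [← real_inner_self_eq_norm_sq, ← real_inner_self_eq_norm_sq]
      simp only [S, T, Fintype.linearCombination_apply]
      rw [← star_dotProduct_gram_mulVec, ← star_dotProduct_gram_mulVec, h]
    exact (sq_eq_sq₀ (norm_nonneg _) (norm_nonneg _)).mp hsq
  -- A linear choice of coefficients `g` turns `T` into a map on the span of `v`.
  obtain ⟨g, hg⟩ := S.rangeRestrict.exists_rightInverse_of_surjective S.range_rangeRestrict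
  have hSg (x : LinearMap.range S) : S (g x) = x :=
    congrArg Subtype.val (LinearMap.congr_fun hg x)
  let L : LinearMap.range S →ₗᵢ[ℝ] E :=
    { toLinearMap := T ∘ₗ g
      norm_map' := fun x => by
        rw [LinearMap.comp_apply, hnorm, hSg]
        rfl }
  refine ⟨L.extend.toLinearIsometryEquiv rfl, fun i => ?_⟩
  have hS : S (Pi.single i 1) = v i := by simp [S]
  have hT : T (Pi.single i 1) = w i := by simp [T]
  let x : LinearMap.range S := ⟨v i, Pi.single i 1, hS⟩
  have hx : L.extend (v i) = T (g x) := L.extend_apply x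
  rw [LinearIsometry.coe_toLinearIsometryEquiv, hx, ← hT]
  -- `T` kills every coefficient vector killed by `S`, so the choice made by `g` is irrelevant.
  rw [← sub_eq_zero, ← map_sub, ← norm_eq_zero, hnorm, map_sub, hSg, hS, sub_self, norm_zero]

/-- realisation of a squared-distance matrix (classical MDS),
with `m = n + 1` points `p₀ = 0, p₁, …, p_n` in `ℝ^n` (so `m ≥ 2` means `n ≥ 1`). -/
theorem stmt_0 (n : ℕ) (hn : 1 ≤ n) (s : Fin (n + 1) → Fin (n + 1) → ℝ)
    (hsymm : ∀ i j, s i j = s j i) (hdiag : ∀ i, s i i = 0)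
    (hnonneg : ∀ i j, 0 ≤ s i j)
    (G : Matrix (Fin n) (Fin n) ℝ)
    (hG : ∀ i j, G i j = (s 0 i.succ + s 0 j.succ - s i.succ j.succ) / 2) :
    ((∃ p : Fin (n + 1) → EuclideanSpace ℝ (Fin n),
        p 0 = 0 ∧ ∀ i j, ‖p i - p j‖ ^ 2 = s i j) ↔ G.PosSemidef) ∧
    (∀ p : Fin (n + 1) → EuclideanSpace ℝ (Fin n),
        p 0 = 0 → (∀ i j, ‖p i - p j‖ ^ 2 = s i j) →
        Module.finrank ℝ
          (Submodule.span ℝ (Set.range fun i : Fin n => p i.succ)) = G.rank) ∧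
    (∀ p q : Fin (n + 1) → EuclideanSpace ℝ (Fin n),
        p 0 = 0 → q 0 = 0 →
        (∀ i j, ‖p i - p j‖ ^ 2 = s i j) →
        (∀ i j, ‖q i - q j‖ ^ 2 = s i j) →
        ∃ h : EuclideanSpace ℝ (Fin n) ≃ₗᵢ[ℝ] EuclideanSpace ℝ (Fin n),
          ∀ i, h (p i) = q i) := by
  refine ⟨⟨?_, ?_⟩, ?_, ?_⟩
  · rintro ⟨p, h0, hp⟩
    rw [eq_gram_of_realises hG h0 hp]
    exact posSemidef_gram ℝ _
  · intro h
    obtain ⟨v, hv⟩ := exists_eq_gram h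
    exact ⟨Fin.cons 0 v, rfl, realises_of_eq_gram hsymm hdiag hG hv⟩
  · intro p h0 hp
    rw [eq_gram_of_realises hG h0 hp]
    exact finrank_span_eq_rank_gram _
  · intro p q hp0 hq0 hp hq
    obtain ⟨f, hf⟩ := exists_isometry_of_gram_eq
      ((eq_gram_of_realises hG hp0 hp).symm.trans (eq_gram_of_realises hG hq0 hq))
    refine ⟨f, fun i => ?_⟩
    cases i using Fin.cases with
    | zero => rw [hp0, hq0, map_zero]
    | succ i => exact hf i
end

section
/- Two non-degenerate backbones S = ((N_i, A_i, C_i))_{i=1}^m and Q = ((N'_i, A'_i, C'_i))_{i=1}^m of the same length m satisfy BRI(S) = BRI(Q) if and only if there exists an orientation-preserving isometry (rigid motion) f of ℝ³ with f(N_i) = N'_i, f(A_i) = A'_i and f(C_i) = C'_i for all i = 1, …, m. Thus the Backbone Rigid Invariant is a complete invariant of non-degenerate backbones under rigid motion in ℝ³. -/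
/-!
The frame `(uᵢ, vᵢ, wᵢ)` of a non-degenerate triple is a positively oriented orthonormal basis and is
built from dot and cross products only, so a rotation `R` carrying the differences `Nᵢ - Aᵢ`,
`Cᵢ - Aᵢ` of one backbone to those of another also carries its frame to the other frame
(`Backbone.SameShape.frame`). Since rotations preserve dot products, the invariant is unchanged under
rigid motions.

Conversely, let the invariants agree, and let `R` be the rotation taking the first frame of `S` to the
first frame of `T`. The first triple of the invariant gives the coordinates of `N₁ - A₁` and `C₁ - A₁`
in the first frame, so `R` together with a translation matches the first residues. If the residues `i`
match, so do the frames `i`; the next nine numbers are the coordinates in these frames of the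
successive bond vectors of the path `Cᵢ, Nᵢ₊₁, Aᵢ₊₁, Cᵢ₊₁`, so the residues `i + 1` match under the same motion.
-/

open Matrix

noncomputable def norm3 (x : Fin 3 → ℝ) : ℝ := Real.sqrt (x ⬝ᵥ x)

/-- A backbone of length `m`: ordered triples `(Nᵢ, Aᵢ, Cᵢ)` of points of `ℝ³`. -/
structure Backbone (m : ℕ) where
  N : Fin m → Fin 3 → ℝ
  A : Fin m → Fin 3 → ℝ
  C : Fin m → Fin 3 → ℝ

def Backbone.NonDegenerate {m : ℕ} (B : Backbone m) : Prop :=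
  ∀ i, LinearIndependent ℝ ![B.N i - B.A i, B.C i - B.A i]

noncomputable def Backbone.u {m : ℕ} (B : Backbone m) (i : Fin m) : Fin 3 → ℝ :=
  (norm3 (B.N i - B.A i))⁻¹ • (B.N i - B.A i)

noncomputable def Backbone.hvec {m : ℕ} (B : Backbone m) (i : Fin m) : Fin 3 → ℝ :=
  (B.C i - B.A i) - ((B.C i - B.A i) ⬝ᵥ B.u i) • B.u i

noncomputable def Backbone.v {m : ℕ} (B : Backbone m) (i : Fin m) : Fin 3 → ℝ :=
  (norm3 (B.hvec i))⁻¹ • B.hvec i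

noncomputable def Backbone.w {m : ℕ} (B : Backbone m) (i : Fin m) : Fin 3 → ℝ :=
  crossProduct (B.u i) (B.v i)

noncomputable def Backbone.briFirst {m : ℕ} (B : Backbone (m + 1)) : ℝ × ℝ × ℝ :=
  (norm3 (B.N 0 - B.A 0), (B.C 0 - B.A 0) ⬝ᵥ B.u 0, norm3 (B.hvec 0))

noncomputable def Backbone.briStep {m : ℕ} (B : Backbone (m + 1)) (i : Fin m) :
    Fin 9 → ℝ :=
  ![(B.N i.succ - B.C i.castSucc) ⬝ᵥ B.u i.castSucc,
    (B.N i.succ - B.C i.castSucc) ⬝ᵥ B.v i.castSucc,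
    (B.N i.succ - B.C i.castSucc) ⬝ᵥ B.w i.castSucc,
    (B.A i.succ - B.N i.succ) ⬝ᵥ B.u i.castSucc,
    (B.A i.succ - B.N i.succ) ⬝ᵥ B.v i.castSucc,
    (B.A i.succ - B.N i.succ) ⬝ᵥ B.w i.castSucc,
    (B.C i.succ - B.A i.succ) ⬝ᵥ B.u i.castSucc,
    (B.C i.succ - B.A i.succ) ⬝ᵥ B.v i.castSucc,
    (B.C i.succ - B.A i.succ) ⬝ᵥ B.w i.castSucc]

lemma norm3_sq (x : Fin 3 → ℝ) : norm3 x * norm3 x = x ⬝ᵥ x :=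
  Real.mul_self_sqrt (by simpa using dotProduct_star_self_nonneg x)

lemma norm3_ne_zero {x : Fin 3 → ℝ} (hx : x ≠ 0) : norm3 x ≠ 0 := by
  intro h
  apply hx
  rw [← dotProduct_self_eq_zero, ← norm3_sq, h, zero_mul]

lemma norm3_smul_inv {x : Fin 3 → ℝ} (hx : x ≠ 0) : norm3 x • (norm3 x)⁻¹ • x = x := by
  rw [smul_smul, mul_inv_cancel₀ (norm3_ne_zero hx), one_smul]

lemma normalize_dot_self {x : Fin 3 → ℝ} (hx : x ≠ 0) :
    ((norm3 x)⁻¹ • x) ⬝ᵥ ((norm3 x)⁻¹ • x) = 1 := by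
  have h := norm3_ne_zero hx
  rw [smul_dotProduct, dotProduct_smul, ← norm3_sq]
  simp only [smul_eq_mul]
  field_simp

lemma dot_mulVec_mulVec {R : Matrix (Fin 3) (Fin 3) ℝ} (hR : Rᵀ * R = 1) (x y : Fin 3 → ℝ) :
    (R *ᵥ x) ⬝ᵥ (R *ᵥ y) = x ⬝ᵥ y := by
  rw [dotProduct_mulVec, vecMul_mulVec, ← dotProduct_mulVec]
  simp [hR]

lemma norm3_mulVec {R : Matrix (Fin 3) (Fin 3) ℝ} (hR : Rᵀ * R = 1) (x : Fin 3 → ℝ) :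
    norm3 (R *ᵥ x) = norm3 x := by
  rw [norm3, norm3, dot_mulVec_mulVec hR]

/-- The cofactor identity behind the equivariance of the cross product. -/
lemma transpose_mulVec_cross (R : Matrix (Fin 3) (Fin 3) ℝ) (x y : Fin 3 → ℝ) :
    Rᵀ *ᵥ (crossProduct (R *ᵥ x) (R *ᵥ y)) = R.det • crossProduct x y := by
  ext i
  fin_cases i <;>
    simp [cross_apply, mulVec, dotProduct, Fin.sum_univ_three, det_fin_three] <;> ring

lemma cross_mulVec_mulVec {R : Matrix (Fin 3) (Fin 3) ℝ} (hR : Rᵀ * R = 1) (hd : R.det = 1)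
    (x y : Fin 3 → ℝ) :
    crossProduct (R *ᵥ x) (R *ᵥ y) = R *ᵥ crossProduct x y := by
  have h := congrArg (R *ᵥ ·) (transpose_mulVec_cross R x y)
  simpa [hd, mulVec_mulVec, mul_eq_one_comm.mp hR] using h

namespace Backbone

variable {m : ℕ}

lemma NonDegenerate.sub_ne_zero {B : Backbone m} (hB : B.NonDegenerate) (i : Fin m) :
    B.N i - B.A i ≠ 0 := (hB i).ne_zero 0

lemma NonDegenerate.hvec_ne_zero {B : Backbone m} (hB : B.NonDegenerate) (i : Fin m) :
    B.hvec i ≠ 0 := by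
  intro h
  have h2 := LinearIndependent.pair_iff.mp (hB i)
    (-(((B.C i - B.A i) ⬝ᵥ B.u i) * (norm3 (B.N i - B.A i))⁻¹)) 1 (by
      rw [← h, hvec, one_smul, neg_smul, mul_smul, u]
      abel)
  exact one_ne_zero h2.2

/-- The matrix whose rows are the frame vectors `uᵢ, vᵢ, wᵢ`; it maps a vector to its coordinates in
the frame. -/
noncomputable def frame (B : Backbone m) (i : Fin m) : Matrix (Fin 3) (Fin 3) ℝ :=
  of ![B.u i, B.v i, B.w i]

lemma frame_mulVec (B : Backbone m) (i : Fin m) (x : Fin 3 → ℝ) :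
    B.frame i *ᵥ x = ![x ⬝ᵥ B.u i, x ⬝ᵥ B.v i, x ⬝ᵥ B.w i] := by
  ext k
  fin_cases k <;> simp [frame, mulVec, dotProduct_comm]

lemma u_dot_u {B : Backbone m} (hB : B.NonDegenerate) (i : Fin m) : B.u i ⬝ᵥ B.u i = 1 :=
  normalize_dot_self (hB.sub_ne_zero i)

lemma v_dot_v {B : Backbone m} (hB : B.NonDegenerate) (i : Fin m) : B.v i ⬝ᵥ B.v i = 1 :=
  normalize_dot_self (hB.hvec_ne_zero i)

lemma u_dot_v {B : Backbone m} (hB : B.NonDegenerate) (i : Fin m) : B.u i ⬝ᵥ B.v i = 0 := by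
  rw [v, dotProduct_smul, hvec, dotProduct_sub, dotProduct_smul, u_dot_u hB, dotProduct_comm]
  simp

lemma w_dot_w {B : Backbone m} (hB : B.NonDegenerate) (i : Fin m) : B.w i ⬝ᵥ B.w i = 1 := by
  rw [w, cross_dot_cross, u_dot_u hB, v_dot_v hB, u_dot_v hB]
  simp

lemma frame_mul_transpose {B : Backbone m} (hB : B.NonDegenerate) (i : Fin m) :
    B.frame i * (B.frame i)ᵀ = 1 := by
  have huw : B.u i ⬝ᵥ B.w i = 0 := dot_self_cross _ _
  have hvw : B.v i ⬝ᵥ B.w i = 0 := dot_cross_self _ _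
  have hvu : B.v i ⬝ᵥ B.u i = 0 := by rw [dotProduct_comm, u_dot_v hB]
  have hwu : B.w i ⬝ᵥ B.u i = 0 := by rw [dotProduct_comm, huw]
  have hwv : B.w i ⬝ᵥ B.v i = 0 := by rw [dotProduct_comm, hvw]
  have entry : ∀ j k, (B.frame i * (B.frame i)ᵀ) j k =
      ![B.u i, B.v i, B.w i] j ⬝ᵥ ![B.u i, B.v i, B.w i] k := fun _ _ => rfl
  ext j k
  rw [entry]
  fin_cases j <;> fin_cases k <;>
    simp [u_dot_u hB, v_dot_v hB, w_dot_w hB, u_dot_v hB, huw, hvw, hvu, hwu, hwv]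

lemma frame_det {B : Backbone m} (hB : B.NonDegenerate) (i : Fin m) : (B.frame i).det = 1 := by
  rw [← w_dot_w hB i]
  simp only [frame, w, det_fin_three, cross_apply, dotProduct, Fin.sum_univ_three]
  simp
  ring

lemma frame_mulVec_injective {B : Backbone m} (hB : B.NonDegenerate) (i : Fin m)
    {x y : Fin 3 → ℝ} (h : B.frame i *ᵥ x = B.frame i *ᵥ y) : x = y := by
  have hxy := congrArg ((B.frame i)ᵀ *ᵥ ·) h
  simpa [mulVec_mulVec, mul_eq_one_comm.mp (frame_mul_transpose hB i)] using hxy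

/-- The linear map `R` carries the `i`-th residue of `S` to that of `T` up to translation. -/
def SameShape (S T : Backbone m) (R : Matrix (Fin 3) (Fin 3) ℝ) (i : Fin m) : Prop :=
  T.N i - T.A i = R *ᵥ (S.N i - S.A i) ∧ T.C i - T.A i = R *ᵥ (S.C i - S.A i)

section Equivariance

variable {S T : Backbone m} {R : Matrix (Fin 3) (Fin 3) ℝ} {i : Fin m}

lemma SameShape.u (h : SameShape S T R i) (hR : Rᵀ * R = 1) : T.u i = R *ᵥ S.u i := by
  rw [Backbone.u, Backbone.u, h.1, norm3_mulVec hR, mulVec_smul]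

lemma SameShape.hvec (h : SameShape S T R i) (hR : Rᵀ * R = 1) : T.hvec i = R *ᵥ S.hvec i := by
  rw [Backbone.hvec, Backbone.hvec, h.u hR, h.2, dot_mulVec_mulVec hR, mulVec_sub _ _ (_ • _),
    mulVec_smul]

lemma SameShape.v (h : SameShape S T R i) (hR : Rᵀ * R = 1) : T.v i = R *ᵥ S.v i := by
  rw [Backbone.v, Backbone.v, h.hvec hR, norm3_mulVec hR, mulVec_smul]

lemma SameShape.w (h : SameShape S T R i) (hR : Rᵀ * R = 1) (hd : R.det = 1) :
    T.w i = R *ᵥ S.w i := by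
  rw [Backbone.w, Backbone.w, h.u hR, h.v hR, cross_mulVec_mulVec hR hd]

/-- Frame coordinates are preserved by a rotation matching the residues. -/
lemma SameShape.frame (h : SameShape S T R i) (hR : Rᵀ * R = 1) (hd : R.det = 1)
    (x : Fin 3 → ℝ) : T.frame i *ᵥ (R *ᵥ x) = S.frame i *ᵥ x := by
  simp only [frame_mulVec, h.u hR, h.v hR, h.w hR hd, dot_mulVec_mulVec hR]

end Equivariance

/-- The nine numbers of a step are the frame coordinates of three consecutive bond vectors. -/
lemma briStep_eq_iff (S T : Backbone (m + 1)) (i : Fin m) :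
    S.briStep i = T.briStep i ↔
      S.frame i.castSucc *ᵥ (S.N i.succ - S.C i.castSucc) =
        T.frame i.castSucc *ᵥ (T.N i.succ - T.C i.castSucc) ∧
      S.frame i.castSucc *ᵥ (S.A i.succ - S.N i.succ) =
        T.frame i.castSucc *ᵥ (T.A i.succ - T.N i.succ) ∧
      S.frame i.castSucc *ᵥ (S.C i.succ - S.A i.succ) =
        T.frame i.castSucc *ᵥ (T.C i.succ - T.A i.succ) := by
  simp only [frame_mulVec, briStep, vecCons_inj, and_assoc, and_true]

lemma N_sub_A {B : Backbone m} (hB : B.NonDegenerate) (i : Fin m) :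
    B.N i - B.A i = norm3 (B.N i - B.A i) • B.u i :=
  (norm3_smul_inv (hB.sub_ne_zero i)).symm

lemma C_sub_A {B : Backbone m} (hB : B.NonDegenerate) (i : Fin m) :
    B.C i - B.A i = ((B.C i - B.A i) ⬝ᵥ B.u i) • B.u i + norm3 (B.hvec i) • B.v i := by
  rw [v, norm3_smul_inv (hB.hvec_ne_zero i), hvec]
  abel

/-- The first residue is determined up to rotation by the first triple of the invariant; the
rotation is the one taking the first frame of `S` to that of `T`. -/
lemma exists_rotation {S T : Backbone (m + 1)} (hS : S.NonDegenerate) (hT : T.NonDegenerate)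
    (h : S.briFirst = T.briFirst) :
    ∃ R : Matrix (Fin 3) (Fin 3) ℝ, Rᵀ * R = 1 ∧ R.det = 1 ∧ SameShape S T R 0 := by
  have key : ∀ x y, T.frame 0 *ᵥ y = S.frame 0 *ᵥ x →
      ((T.frame 0)ᵀ * S.frame 0) *ᵥ x = y := by
    intro x y hxy
    rw [← mulVec_mulVec, ← hxy, mulVec_mulVec, mul_eq_one_comm.mp (frame_mul_transpose hT 0),
      one_mulVec]
  have hu : ((T.frame 0)ᵀ * S.frame 0) *ᵥ S.u 0 = T.u 0 := by
    apply key
    simp only [frame_mulVec, u_dot_u hS, u_dot_u hT, u_dot_v hS, u_dot_v hT, w, dot_self_cross]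
  have hv : ((T.frame 0)ᵀ * S.frame 0) *ᵥ S.v 0 = T.v 0 := by
    apply key
    simp only [frame_mulVec, v_dot_v hS, v_dot_v hT, dotProduct_comm (v _ _) (u _ _),
      u_dot_v hS, u_dot_v hT, w, dot_cross_self]
  simp only [briFirst, Prod.mk.injEq] at h
  obtain ⟨h1, h2, h3⟩ := h
  refine ⟨(T.frame 0)ᵀ * S.frame 0, ?_, ?_, ?_, ?_⟩
  · rw [transpose_mul, transpose_transpose, Matrix.mul_assoc, ← Matrix.mul_assoc (T.frame 0),
      frame_mul_transpose hT, Matrix.one_mul, mul_eq_one_comm.mp (frame_mul_transpose hS 0)]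
  · rw [det_mul, det_transpose, frame_det hS, frame_det hT, one_mul]
  · rw [N_sub_A hS, N_sub_A hT, mulVec_smul, hu, h1]
  · rw [C_sub_A hS, C_sub_A hT, mulVec_add, mulVec_smul, mulVec_smul, hu, hv, h2, h3]

end Backbone

/-- the Backbone Rigid Invariant is a complete invariant of
non-degenerate backbones under rigid motion (orientation-preserving isometry)
of `ℝ³`, i.e. maps `x ↦ Rx + b` with `R` special orthogonal. -/
theorem stmt_1 {m : ℕ} (S T : Backbone (m + 1))
    (hS : S.NonDegenerate) (hT : T.NonDegenerate) :
    (S.briFirst = T.briFirst ∧ ∀ i, S.briStep i = T.briStep i) ↔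
    ∃ R : Matrix (Fin 3) (Fin 3) ℝ, R.transpose * R = 1 ∧ R.det = 1 ∧
      ∃ b : Fin 3 → ℝ, ∀ i,
        R.mulVec (S.N i) + b = T.N i ∧
        R.mulVec (S.A i) + b = T.A i ∧
        R.mulVec (S.C i) + b = T.C i := by
  have shape : ∀ (R : Matrix (Fin 3) (Fin 3) ℝ) (b : Fin 3 → ℝ) (i : Fin (m + 1)),
      R *ᵥ S.N i + b = T.N i ∧ R *ᵥ S.A i + b = T.A i ∧ R *ᵥ S.C i + b = T.C i →
      Backbone.SameShape S T R i := by
    rintro R b i ⟨h1, h2, h3⟩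
    constructor
    · rw [← h1, ← h2, mulVec_sub, add_sub_add_right_eq_sub]
    · rw [← h3, ← h2, mulVec_sub, add_sub_add_right_eq_sub]
  constructor
  · rintro ⟨h0, hstep⟩
    obtain ⟨R, hR, hd, hs⟩ := Backbone.exists_rotation hS hT h0
    refine ⟨R, hR, hd, T.A 0 - R *ᵥ S.A 0, fun i => ?_⟩
    induction i using Fin.induction with
    | zero =>
      obtain ⟨h1, h2⟩ := hs
      rw [mulVec_sub] at h1 h2
      refine ⟨?_, ?_, ?_⟩
      · linear_combination -h1
      · abel
      · linear_combination -h2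
    | succ i ih =>
      have hsi := shape R _ _ ih
      obtain ⟨e1, e2, e3⟩ := (Backbone.briStep_eq_iff S T i).mp (hstep i)
      rw [← hsi.frame hR hd] at e1 e2 e3
      -- bond vectors with equal coordinates in the matched frames correspond under `R`
      have d1 := Backbone.frame_mulVec_injective hT _ e1
      have d2 := Backbone.frame_mulVec_injective hT _ e2
      have d3 := Backbone.frame_mulVec_injective hT _ e3
      rw [mulVec_sub] at d1 d2 d3
      obtain ⟨-, -, hC⟩ := ih
      refine ⟨?_, ?_, ?_⟩
      · linear_combination hC + d1
      · linear_combination hC + d1 + d2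
      · linear_combination hC + d1 + d2 + d3
  · rintro ⟨R, hR, hd, b, h⟩
    have hs := fun i => shape R b i (h i)
    refine ⟨?_, fun i => ?_⟩
    · simp only [Backbone.briFirst, (hs 0).1, (hs 0).2, (hs 0).u hR, (hs 0).hvec hR,
        norm3_mulVec hR, dot_mulVec_mulVec hR]
    · rw [Backbone.briStep_eq_iff]
      simp only [← (hs i.castSucc).frame hR hd]
      obtain ⟨n, a, c⟩ := h i.succ
      obtain ⟨-, -, cPrev⟩ := h i.castSucc
      rw [← n, ← a, ← c, ← cPrev]
      simp only [mulVec_sub, add_sub_add_right_eq_sub, and_self]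
end

section
/- Let A and B be sets of m unordered points in ℝ^n such that all m(m−1)/2 pairwise distances within A are pairwise distinct and all pairwise distances within B are pairwise distinct. If PDD(A; m−1) = PDD(B; m−1) as multisets, then A and B are isometric. Hence any cloud of m points in ℝ^n with distinct inter-point distances can be reconstructed from its Pointwise Distance Distribution uniquely up to isometry. -/
/-!
Equality of the two multisets of rows yields a bijection `g : A ≃ B` such that the row of `p`
equals the row of `g p` (`exists_equiv_of_map_univ_eq`). This bijection preserves distances: for
`p ≠ q` in `A` the number `d = dist p q` occurs in the rows of `p` and of `q`, hence in those of
`g p` and of `g q`. As only one pair of points of `B` is at distance `d`, that pair contains both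
`g p` and `g q`, so `dist (g p) (g q) = d`.

A distance-preserving map between finite families of points of a Euclidean space extends to an
isometry of the whole space (`exists_isometryEquiv_of_dist_eq`): after moving a base point to the
origin the two families have the same Gram matrix, which gives a linear isometry between their
spans, and `LinearIsometry.extend` extends it to the space.
-/

open scoped Classical in
/-- The Pointwise Distance Distribution `PDD(A; |A|-1)`: the multiset, indexed by
the points `p ∈ A`, of the multisets of distances from `p` to all other points of `A`
(a multiset of distances determines the non-decreasingly ordered list and vice versa). -/
noncomputable def PDD {n : ℕ} (A : Finset (EuclideanSpace ℝ (Fin n))) :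
    Multiset (Multiset ℝ) :=
  A.val.map fun p => (A.erase p).val.map fun q => dist p q

/-- Two finite families with the same multiset of values differ by a bijection of the index
types. -/
lemma exists_equiv_of_map_univ_eq {α β γ : Type*} [Fintype α] [Fintype β]
    (f : α → γ) (g : β → γ)
    (h : (Finset.univ : Finset α).val.map f = (Finset.univ : Finset β).val.map g) :
    ∃ e : α ≃ β, ∀ a, g (e a) = f a := by
  classical
  -- The fibres of `f` and `g` over `c` are equinumerous: their sizes are the multiplicities of `c`.
  have key : ∀ c, Nonempty ({a // f a = c} ≃ {b // g b = c}) := by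
    intro c
    rw [← Fintype.card_eq, Fintype.card_subtype, Fintype.card_subtype]
    have h2 := congrArg (Multiset.count c) h
    rw [Multiset.count_map, Multiset.count_map] at h2
    simpa [Finset.card, Finset.filter, eq_comm] using h2
  exact ⟨Equiv.ofFiberEquiv fun c => (key c).some, Equiv.ofFiberEquiv_map _⟩

/-- Families of vectors with equal Gram matrices are related by a linear isometry of the space. -/
lemma exists_linearIsometry_of_inner_eq {ι V : Type*} [Fintype ι] [NormedAddCommGroup V]
    [InnerProductSpace ℝ V] [FiniteDimensional ℝ V] (u v : ι → V)
    (h : ∀ i j, inner ℝ (u i) (u j) = inner ℝ (v i) (v j)) :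
    ∃ L : V →ₗᵢ[ℝ] V, ∀ i, L (u i) = v i := by
  classical
  set U := Fintype.linearCombination ℝ u with hU
  set W := Fintype.linearCombination ℝ v with hW
  have hn : ∀ c, ‖W c‖ = ‖U c‖ := by
    intro c
    rw [← sq_eq_sq₀ (norm_nonneg _) (norm_nonneg _), ← real_inner_self_eq_norm_sq,
      ← real_inner_self_eq_norm_sq]
    simp only [hU, hW, Fintype.linearCombination_apply, sum_inner, inner_sum, inner_smul_left,
      inner_smul_right, h]
  -- A linear section `s` of `U` onto its range; `W ∘ s` is the isometry sought on that range.
  obtain ⟨s, hs⟩ := U.rangeRestrict.exists_rightInverse_of_surjective U.range_rangeRestrict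
  have hs' : ∀ x, U (s x) = x := fun x => congrArg Subtype.val (LinearMap.congr_fun hs x)
  let L : LinearMap.range U →ₗᵢ[ℝ] V :=
    ⟨W ∘ₗ s, fun x => by rw [LinearMap.comp_apply, hn, hs']; rfl⟩
  refine ⟨L.extend, fun i => ?_⟩
  have hu : U (Pi.single i 1) = u i := by simp [hU, Fintype.linearCombination_apply_single]
  have hv : W (Pi.single i 1) = v i := by simp [hW, Fintype.linearCombination_apply_single]
  have hL := L.extend_apply ⟨u i, Pi.single i 1, hu⟩
  refine hL.trans ?_
  change W (s ⟨u i, _⟩) = v i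
  -- `W` annihilates the kernel of `U`, so the choice of preimage of `u i` is immaterial.
  rw [← hv, ← sub_eq_zero, ← map_sub, ← norm_eq_zero, hn, map_sub, hs', hu, sub_self, norm_zero]

/-- Finite families of points with equal pairwise distances are related by an isometry of the
space. -/
lemma exists_isometryEquiv_of_dist_eq {ι V : Type*} [Fintype ι] [NormedAddCommGroup V]
    [InnerProductSpace ℝ V] [FiniteDimensional ℝ V] (a b : ι → V)
    (h : ∀ i j, dist (b i) (b j) = dist (a i) (a j)) :
    ∃ f : V ≃ᵢ V, ∀ i, f (a i) = b i := by
  rcases isEmpty_or_nonempty ι with hι | ⟨⟨k⟩⟩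
  · exact ⟨IsometryEquiv.refl V, fun i => isEmptyElim i⟩
  obtain ⟨L, hL⟩ := exists_linearIsometry_of_inner_eq (fun i => a i - a k) (fun i => b i - b k) (by
    intro i j
    simp only [real_inner_eq_norm_mul_self_add_norm_mul_self_sub_norm_sub_mul_self_div_two,
      sub_sub_sub_cancel_right, ← dist_eq_norm, h])
  refine ⟨(IsometryEquiv.subRight (a k)).trans
    ((L.toLinearIsometryEquiv rfl).toIsometryEquiv.trans (IsometryEquiv.addRight (b k))),
    fun i => ?_⟩
  simp [hL]

/-- clouds of `m` points with pairwise distinct inter-point distances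
and equal PDDs are isometric. -/
theorem stmt_2 {n m : ℕ} (A B : Finset (EuclideanSpace ℝ (Fin n)))
    (hA : A.card = m) (hB : B.card = m)
    (hAgen : ∀ p ∈ A, ∀ q ∈ A, ∀ r ∈ A, ∀ t ∈ A, p ≠ q → r ≠ t →
      dist p q = dist r t → ({p, q} : Set (EuclideanSpace ℝ (Fin n))) = {r, t})
    (hBgen : ∀ p ∈ B, ∀ q ∈ B, ∀ r ∈ B, ∀ t ∈ B, p ≠ q → r ≠ t →
      dist p q = dist r t → ({p, q} : Set (EuclideanSpace ℝ (Fin n))) = {r, t})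
    (hPDD : PDD A = PDD B) :
    ∃ f : EuclideanSpace ℝ (Fin n) ≃ᵢ EuclideanSpace ℝ (Fin n),
      f '' ↑A = (↑B : Set (EuclideanSpace ℝ (Fin n))) := by
  classical
  let row (C : Finset (EuclideanSpace ℝ (Fin n))) (p : EuclideanSpace ℝ (Fin n)) : Multiset ℝ :=
    (C.erase p).val.map fun q => dist p q
  have hrow : ∀ C, PDD C = (Finset.univ : Finset C).val.map fun p : C => row C p := by
    intro C
    have h1 : C.val = (Finset.univ : Finset C).val.map Subtype.val :=
      (Multiset.attach_map_val C.val).symm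
    have h2 : PDD C = C.val.map (row C) := by
      unfold PDD
      congr!
    rw [h2, h1, Multiset.map_map]
    rfl
  obtain ⟨g, hg⟩ := exists_equiv_of_map_univ_eq (fun p : A => row A p) (fun p : B => row B p)
    (by rw [← hrow, ← hrow, hPDD])
  -- Each distance from `p` within `A` is realised from `g p` within `B`.
  have hex : ∀ p q : A, p ≠ q → ∃ x ∈ B, x ≠ g p ∧ dist (g p : EuclideanSpace ℝ (Fin n)) x
      = dist (p : EuclideanSpace ℝ (Fin n)) q := by
    intro p q hpq
    have : dist (p : EuclideanSpace ℝ (Fin n)) q ∈ row A p :=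
      Multiset.mem_map.2 ⟨q, Finset.mem_erase.2 ⟨fun h => hpq (Subtype.ext h.symm), q.2⟩, rfl⟩
    rw [← show row B (g p) = row A p from hg p] at this
    obtain ⟨x, hx, hd⟩ := Multiset.mem_map.1 this
    obtain ⟨hne, hxB⟩ := Finset.mem_erase.1 hx
    exact ⟨x, hxB, hne, hd⟩
  have hdist : ∀ p q : A, dist (g p : EuclideanSpace ℝ (Fin n)) (g q)
      = dist (p : EuclideanSpace ℝ (Fin n)) q := by
    intro p q
    by_cases hpq : p = q
    · simp [hpq]
    obtain ⟨x, hxB, hx, hdx⟩ := hex p q hpq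
    obtain ⟨y, hyB, hy, hdy⟩ := hex q p (Ne.symm hpq)
    have hset := hBgen _ (g p).2 x hxB _ (g q).2 y hyB hx.symm hy.symm
      (by rw [hdx, hdy, dist_comm])
    have hmem : (g q : EuclideanSpace ℝ (Fin n)) ∈
        ({(g p : EuclideanSpace ℝ (Fin n)), x} : Set _) := by
      rw [hset]; exact Set.mem_insert _ _
    rcases hmem with h | h
    · exact absurd (g.injective (Subtype.ext h.symm)) hpq
    · rw [Set.mem_singleton_iff.1 h, hdx]
  obtain ⟨f, hf⟩ := exists_isometryEquiv_of_dist_eq (fun p : A => (p : EuclideanSpace ℝ (Fin n)))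
    (fun p : A => (g p : EuclideanSpace ℝ (Fin n))) hdist
  refine ⟨f, Set.ext fun z => ⟨?_, fun hz => ?_⟩⟩
  · rintro ⟨p, hp, rfl⟩
    have := hf ⟨p, hp⟩
    simp only at this
    rw [this]
    exact (g _).2
  · refine ⟨g.symm ⟨z, hz⟩, (g.symm ⟨z, hz⟩).2, ?_⟩
    simpa using hf (g.symm ⟨z, hz⟩)
end

section
/- Let n ≥ 1 and let C, C' ⊂ ℝ^n be finite sets of m > n points each. Let p₁, …, p_n ∈ C and q₁, …, q_n ∈ C' be affinely independent n-tuples (each spanning an (n−1)-dimensional affine subspace). Assume: (i) ‖p_i − p_j‖ = ‖q_i − q_j‖ for all 1 ≤ i, j ≤ n; and (ii) there is a bijection g from C ∖ {p₁,…,p_n} onto C' ∖ {q₁,…,q_n} such that for every x ∈ C ∖ {p₁,…,p_n} one has ‖x − p_i‖ = ‖g(x) − q_i‖ for i = 1,…,n, and the determinants det(x − p₁, …, x − p_n) and det(g(x) − q₁, …, g(x) − q_n) have the same sign (both positive, both negative, or both zero). Then there exists an orientation-preserving isometry f of ℝ^n with f(p_i) = q_i for i = 1,…,n and f(C) = C'.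 In particular, a cloud of m > n unordered points in ℝ^n is reconstructed from the distances and determinant signs of all its points relative to any affinely independent base n-tuple, uniquely up to rigid motion. -/
/-!
Put the base points `p i₀`, `q i₀` at the origin. Equality of distances is, by polarization, equality
of the Gram matrices of the difference vectors, so there is a linear isometry `L` carrying
`p i - p i₀` to `v i = q i - q i₀` (`exists_linearIsometryEquiv_of_inner_eq`). The vectors `v i`
span a hyperplane `S`; composing `L`, if `det L = -1`, with the reflection in `S`, which fixes `S`
and has determinant `-1`, makes `det L = 1`. The rigid motion is `f x = L (x - p i₀) + q i₀`.

It agrees with `g` on the remaining points: `X = f x - q i₀` and `Y = g x - q i₀` have the same norm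
and the same inner products with `S`, so if they differ they are mirror images in `S`
(`reflection_eq_of_ne`). The reflection negates the determinant of the vectors `X - v i`, so equality of
signs forces this determinant to vanish, which puts `X` in `S`; then `X` is its own mirror image, so
`X = Y` after all (`eq_of_sign_det_eq`).
-/

/-- A rigid motion (orientation-preserving isometry) of `ℝⁿ`: `x ↦ L x + b`
with `L` a linear isometry of determinant `1`. -/
def IsRigidMotion {n : ℕ}
    (f : EuclideanSpace ℝ (Fin n) → EuclideanSpace ℝ (Fin n)) : Prop :=
  ∃ (L : EuclideanSpace ℝ (Fin n) ≃ₗᵢ[ℝ] EuclideanSpace ℝ (Fin n))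
    (b : EuclideanSpace ℝ (Fin n)),
      LinearMap.det L.toLinearEquiv.toLinearMap = 1 ∧ ∀ x, f x = L x + b

open Module in
/-- A linearly independent family is carried to any family with the same Gram matrix by a
linear isometry of the whole space. -/
lemma exists_linearIsometryEquiv_of_inner_eq {E ι : Type*} [NormedAddCommGroup E]
    [InnerProductSpace ℝ E] [FiniteDimensional ℝ E] {u v : ι → E} (hu : LinearIndependent ℝ u)
    (h : ∀ i j, inner ℝ (u i) (u j) = inner ℝ (v i) (v j)) :
    ∃ L : E ≃ₗᵢ[ℝ] E, ∀ i, L (u i) = v i := by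
  let B := Basis.span hu
  let L₀ : Submodule.span ℝ (Set.range u) →ₗ[ℝ] E := B.constr ℝ v
  have hB (i : ι) : ((B i : Submodule.span ℝ (Set.range u)) : E) = u i :=
    congrArg Subtype.val (Basis.span_apply hu i)
  have hL₀ (i : ι) : L₀ (B i) = v i := B.constr_basis ℝ v i
  have hform : (innerₗ E).compl₁₂ L₀ L₀ = innerₗ (Submodule.span ℝ (Set.range u)) := by
    refine LinearMap.ext_basis B B fun i j => ?_
    simp [hL₀, hB, h]
  let L₁ := L₀.isometryOfInner fun x y => LinearMap.congr_fun₂ hform x y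
  refine ⟨L₁.extend.toLinearIsometryEquiv rfl, fun i => ?_⟩
  rw [LinearIsometry.coe_toLinearIsometryEquiv, ← hB i, LinearIsometry.extend_apply]
  exact hL₀ i

lemma inner_sub_sub_eq_dist {E : Type*} [NormedAddCommGroup E] [InnerProductSpace ℝ E]
    (x y o : E) : inner ℝ (x - o) (y - o) =
      (dist x o * dist x o + dist y o * dist y o - dist x y * dist x y) / 2 := by
  rw [real_inner_eq_norm_mul_self_add_norm_mul_self_sub_norm_sub_mul_self_div_two,
    sub_sub_sub_cancel_right, dist_eq_norm, dist_eq_norm, dist_eq_norm]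

lemma det_linearIsometryEquiv_eq_one_or {E : Type*} [NormedAddCommGroup E]
    [InnerProductSpace ℝ E] [FiniteDimensional ℝ E] (L : E ≃ₗᵢ[ℝ] E) :
    LinearMap.det L.toLinearEquiv.toLinearMap = 1 ∨
      LinearMap.det L.toLinearEquiv.toLinearMap = -1 := by
  have h := L.toLinearIsometry.normDet_eq_one
  rw [LinearMap.normDet_eq_abs_det] at h
  exact eq_or_eq_neg_of_abs_eq h

/-- Two distinct vectors of equal norm whose difference is orthogonal to a hyperplane are mirror
images of each other in it. -/
lemma reflection_eq_of_ne {E : Type*} [NormedAddCommGroup E]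
    [InnerProductSpace ℝ E] [FiniteDimensional ℝ E] {S : Submodule ℝ E}
    (hS : Module.finrank ℝ Sᗮ = 1) {X Y : E} (hnorm : ‖X‖ = ‖Y‖) (horth : X - Y ∈ Sᗮ)
    (hne : X ≠ Y) : S.reflection X = Y := by
  have hspan : Submodule.span ℝ {X - Y} = Sᗮ := by
    refine Submodule.eq_of_le_of_finrank_eq ?_ ?_
    · rwa [Submodule.span_singleton_le_iff_mem]
    · rw [hS, finrank_span_singleton (sub_ne_zero.2 hne)]
  have hS' : S = (Submodule.span ℝ {X - Y})ᗮ := by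
    rw [hspan, Submodule.orthogonal_orthogonal]
  have h := Submodule.reflection_sub hnorm
  simp only [← hS'] at h
  exact h

lemma det_of_eq_basis_det {n : ℕ} (w : Fin n → EuclideanSpace ℝ (Fin n)) :
    Matrix.det (Matrix.of fun r c : Fin n => (w c) r) =
      (EuclideanSpace.basisFun (Fin n) ℝ).toBasis.det w := by
  rw [Module.Basis.det_apply]
  rfl

lemma det_of_map {n : ℕ} (L : EuclideanSpace ℝ (Fin n) →ₗ[ℝ] EuclideanSpace ℝ (Fin n))
    (w : Fin n → EuclideanSpace ℝ (Fin n)) :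
    Matrix.det (Matrix.of fun r c : Fin n => (L (w c)) r) =
      LinearMap.det L * Matrix.det (Matrix.of fun r c : Fin n => (w c) r) := by
  rw [det_of_eq_basis_det, det_of_eq_basis_det]
  exact Module.Basis.det_comp _ L w

/-- If `v` spans a hyperplane and one of the `v c` is zero, the vectors `X - v c` can only be linearly
dependent when `X` lies in the hyperplane. -/
lemma mem_span_of_det_eq_zero {n : ℕ} {v : Fin n → EuclideanSpace ℝ (Fin n)} {i₀ : Fin n}
    (hv : v i₀ = 0)
    (hS : Module.finrank ℝ (Submodule.span ℝ (Set.range v)) + 1 = n)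
    {X : EuclideanSpace ℝ (Fin n)}
    (hdet : Matrix.det (Matrix.of fun r c : Fin n => (X - v c) r) = 0) :
    X ∈ Submodule.span ℝ (Set.range v) := by
  by_contra hX
  set W := Submodule.span ℝ (Set.range fun c => X - v c) with hW
  have hmem (c : Fin n) : X - v c ∈ W := Submodule.subset_span ⟨c, rfl⟩
  have hXW : X ∈ W := by simpa [hv] using hmem i₀
  have hSW : Submodule.span ℝ (Set.range v) ≤ W := by
    rw [Submodule.span_le]
    rintro _ ⟨c, rfl⟩
    simpa using W.sub_mem hXW (hmem c)
  have hlt : Submodule.span ℝ (Set.range v) < W :=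
    lt_of_le_of_ne hSW fun h => hX (h ▸ hXW)
  have hrank := Submodule.finrank_lt_finrank_of_lt hlt
  have hle := Submodule.finrank_le W
  have htop : W = ⊤ := by
    apply Submodule.eq_top_of_finrank_eq
    rw [finrank_euclideanSpace_fin] at hle ⊢
    omega
  have hli : LinearIndependent ℝ fun c => X - v c :=
    linearIndependent_of_top_le_span_of_card_eq_finrank htop.ge (by simp)
  have hunit := ((EuclideanSpace.basisFun (Fin n) ℝ).toBasis.is_basis_iff_det).1 ⟨hli, htop⟩
  rw [← det_of_eq_basis_det (fun c => X - v c), hdet] at hunit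
  exact not_isUnit_zero hunit

/-- A vector is determined by its norm, its inner products with a spanning family `v` of a hyperplane
that contains the zero vector, and the sign of the determinant of the vectors `X - v c`. -/
lemma eq_of_sign_det_eq {n : ℕ} {v : Fin n → EuclideanSpace ℝ (Fin n)} {i₀ : Fin n}
    (hv : v i₀ = 0)
    (hS : Module.finrank ℝ (Submodule.span ℝ (Set.range v)) + 1 = n)
    {X Y : EuclideanSpace ℝ (Fin n)} (hnorm : ‖X‖ = ‖Y‖)
    (hinner : ∀ i, inner ℝ (v i) X = inner ℝ (v i) Y)
    (hsign : Real.sign (Matrix.det (Matrix.of fun r c : Fin n => (X - v c) r)) =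
      Real.sign (Matrix.det (Matrix.of fun r c : Fin n => (Y - v c) r))) :
    X = Y := by
  by_contra hne
  set S := Submodule.span ℝ (Set.range v) with hSdef
  have hrank : Module.finrank ℝ Sᗮ = 1 := by
    have := S.finrank_add_finrank_orthogonal
    rw [finrank_euclideanSpace_fin] at this
    omega
  have horth : X - Y ∈ Sᗮ := by
    rw [← Submodule.span_singleton_le_iff_mem, ← Submodule.le_orthogonal_iff_le_orthogonal,
      hSdef, Submodule.span_le]
    rintro _ ⟨i, rfl⟩
    rw [SetLike.mem_coe, Submodule.mem_orthogonal_singleton_iff_inner_left, inner_sub_right,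
      hinner, sub_self]
  have hrefl := reflection_eq_of_ne hrank hnorm horth hne
  have hfix (c : Fin n) : S.reflection (v c) = v c :=
    Submodule.reflection_mem_subspace_eq_self (Submodule.subset_span ⟨c, rfl⟩)
  have hdet := det_of_map S.reflection.toLinearMap (fun c => X - v c)
  rw [Submodule.det_reflection, hrank] at hdet
  simp only [map_sub, LinearEquiv.coe_coe, LinearIsometryEquiv.coe_toLinearEquiv, hrefl, hfix,
    pow_one, neg_one_mul] at hdet
  rw [hdet, Real.sign_neg, self_eq_neg, Real.sign_eq_zero_iff] at hsign
  have hXS := mem_span_of_det_eq_zero hv hS hsign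
  rw [← Submodule.reflection_eq_self_iff] at hXS
  exact hne (hXS.symm.trans hrefl)

/-- reconstruction of a cloud from distances and determinant signs
relative to an affinely independent base `n`-tuple, uniquely under rigid motion. -/
theorem stmt_4 {n m : ℕ} (hn : 1 ≤ n) (hm : n < m)
    (C C' : Finset (EuclideanSpace ℝ (Fin n)))
    (hC : C.card = m) (hC' : C'.card = m)
    (p q : Fin n → EuclideanSpace ℝ (Fin n))
    (hpC : ∀ i, p i ∈ C) (hqC' : ∀ i, q i ∈ C')
    (hp : AffineIndependent ℝ p) (hq : AffineIndependent ℝ q)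
    (hdist : ∀ i j, dist (p i) (p j) = dist (q i) (q j))
    (g : (↑C \ Set.range p : Set (EuclideanSpace ℝ (Fin n))) →
         (↑C' \ Set.range q : Set (EuclideanSpace ℝ (Fin n))))
    (hg : Function.Bijective g)
    (hgdist : ∀ x : (↑C \ Set.range p : Set (EuclideanSpace ℝ (Fin n))), ∀ i,
      dist (x : EuclideanSpace ℝ (Fin n)) (p i) =
      dist (g x : EuclideanSpace ℝ (Fin n)) (q i))
    (hgsign : ∀ x : (↑C \ Set.range p : Set (EuclideanSpace ℝ (Fin n))),
      Real.sign (Matrix.det (Matrix.of fun r c : Fin n =>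
        ((x : EuclideanSpace ℝ (Fin n)) - p c) r)) =
      Real.sign (Matrix.det (Matrix.of fun r c : Fin n =>
        ((g x : EuclideanSpace ℝ (Fin n)) - q c) r))) :
    ∃ f : EuclideanSpace ℝ (Fin n) → EuclideanSpace ℝ (Fin n),
      IsRigidMotion f ∧ (∀ i, f (p i) = q i) ∧
      f '' ↑C = (↑C' : Set (EuclideanSpace ℝ (Fin n))) := by
  let i₀ : Fin n := ⟨0, hn⟩
  let u : Fin n → EuclideanSpace ℝ (Fin n) := fun i => p i - p i₀
  let v : Fin n → EuclideanSpace ℝ (Fin n) := fun i => q i - q i₀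
  let S := Submodule.span ℝ (Set.range v)
  have hv : v i₀ = 0 := sub_self _
  have hS : Module.finrank ℝ S + 1 = n := by
    have h : vectorSpan ℝ (Set.range q) = S :=
      vectorSpan_range_eq_span_range_vsub_right ℝ q i₀
    rw [← h, hq.finrank_vectorSpan (n := n - 1) (by simp; omega)]
    omega
  have hrank : Module.finrank ℝ Sᗮ = 1 := by
    have := S.finrank_add_finrank_orthogonal
    rw [finrank_euclideanSpace_fin] at this
    omega
  obtain ⟨L, hL, hLdet⟩ : ∃ L : EuclideanSpace ℝ (Fin n) ≃ₗᵢ[ℝ] EuclideanSpace ℝ (Fin n),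
      (∀ i, L (u i) = v i) ∧ LinearMap.det L.toLinearEquiv.toLinearMap = 1 := by
    have hli := (affineIndependent_iff_linearIndependent_vsub ℝ p i₀).1 hp
    obtain ⟨L, hL⟩ := exists_linearIsometryEquiv_of_inner_eq
      (v := fun i : {i // i ≠ i₀} => v i) hli fun i j => by
        simp only [vsub_eq_sub, v, inner_sub_sub_eq_dist, hdist]
    have hL' (i : Fin n) : L (u i) = v i := by
      by_cases hi : i = i₀
      · subst hi
        simp [u, v]
      · exact hL ⟨i, hi⟩
    rcases det_linearIsometryEquiv_eq_one_or L with h | h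
    · exact ⟨L, hL', h⟩
    · refine ⟨L.trans S.reflection, fun i => ?_, ?_⟩
      · rw [LinearIsometryEquiv.trans_apply, hL']
        exact Submodule.reflection_mem_subspace_eq_self (Submodule.subset_span ⟨i, rfl⟩)
      · have hcomp : (L.trans S.reflection).toLinearEquiv.toLinearMap =
            S.reflection.toLinearMap ∘ₗ L.toLinearEquiv.toLinearMap := rfl
        rw [hcomp, LinearMap.det_comp, Submodule.det_reflection, hrank, h]
        norm_num
  have hfp (i : Fin n) : L (p i - p i₀) + q i₀ = q i := by
    rw [show L (p i - p i₀) = q i - q i₀ from hL i, sub_add_cancel]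
  have hfg (x : (↑C \ Set.range p : Set (EuclideanSpace ℝ (Fin n)))) :
      L (x - p i₀) + q i₀ = g x := by
    rw [← eq_sub_iff_add_eq]
    refine eq_of_sign_det_eq hv hS ?_ (fun i => ?_) ?_
    · rw [L.norm_map, ← dist_eq_norm, ← dist_eq_norm, hgdist]
    · rw [← hL i, L.inner_map_map, hL i]
      simp only [u, v, inner_sub_sub_eq_dist, hdist, hgdist, dist_comm (p i) x,
        dist_comm (q i) (g x)]
    · have hdet := det_of_map L.toLinearEquiv.toLinearMap (fun c => (x : EuclideanSpace ℝ _) - p c)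
      rw [hLdet, one_mul] at hdet
      have hX (c : Fin n) : L (x - p i₀) - v c = L (x - p c) := by
        rw [← hL c, ← map_sub, sub_sub_sub_cancel_right]
      have hY (c : Fin n) : (g x : EuclideanSpace ℝ (Fin n)) - q i₀ - v c = g x - q c :=
        sub_sub_sub_cancel_right _ _ _
      simp only [hX, hY]
      rw [← hgsign x, ← hdet]
      rfl
  refine ⟨fun x => L (x - p i₀) + q i₀,
    ⟨L, q i₀ - L (p i₀), hLdet, fun x => by simp only [map_sub]; abel⟩, hfp, ?_⟩
  apply Set.Subset.antisymm
  · rintro _ ⟨x, hx, rfl⟩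
    by_cases hxp : x ∈ Set.range p
    · obtain ⟨i, rfl⟩ := hxp
      simpa only [hfp, Finset.mem_coe] using hqC' i
    · have h := hfg ⟨x, hx, hxp⟩
      simp only at h ⊢
      rw [h]
      exact (g ⟨x, hx, hxp⟩).2.1
  · intro y hy
    by_cases hyq : y ∈ Set.range q
    · obtain ⟨i, rfl⟩ := hyq
      exact ⟨p i, hpC i, hfp i⟩
    · obtain ⟨x, hx⟩ := hg.2 ⟨y, hy, hyq⟩
      exact ⟨x, x.2.1, (hfg x).trans (congrArg Subtype.val hx)⟩
end

section
/- For every n ≥ 1 there exists a constant λ_n > 0 with the following property: for every ε ≥ 0 and all (n+1)-tuples A = (q₀, …, q_n) and A' = (q'₀, …, q'_n) of points in ℝ^n with ‖q_i − q'_i‖ ≤ ε for each i = 0, …, n, the strengths satisfy |σ(A') − σ(A)| ≤ 2 λ_n ε. Thus the strength of a simplex is Lipschitz continuous under perturbations of its vertices. -/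
/-!
Writing `v i = q (i+1) - q 0` for the edge vectors at `q 0`, the simplex is the image of the
corner simplex `conv (0, e₁, …, eₙ)` under an affine map with linear part `eᵢ ↦ v i`, so
`V = |det v| * c` with `c` the volume of the corner simplex (`volume_hull_eq`).

The determinant is multilinear and bounded, and each edge has length at most `2 p`. Hence
`|det v| ≤ a pⁿ`, and moving the vertices by at most `ε` changes `det v` by at most
`b max(p, p')ⁿ⁻¹ ε`, while the half-perimeter `p` changes by at most `(n+1)² ε`.

The rest is an inequality about real numbers (`strength_core`). For `p' ≤ p` and `N = 2n - 1`,
`D²/p^N - D'²/p'^N = (D² - D'²)/p^N - D'² (1/p'^N - 1/p^N)`; the first term is at most `2 a b ε`,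
and Bernoulli's inequality bounds the second by `a² N (p - p')`, because `D'² ≤ a² p'^(N+1)`.
-/

/-- Half of the sum of all pairwise distances between the `n+1` points. -/
noncomputable def halfPerimeter {n : ℕ}
    (q : Fin (n + 1) → EuclideanSpace ℝ (Fin n)) : ℝ :=
  (1 / 2) * ∑ i : Fin (n + 1),
    ∑ j ∈ Finset.univ.filter (fun j => i < j), dist (q i) (q j)

/-- The strength `σ(A) = V(A)² / p(A)^{2n−1}` of a simplex on `n+1` points of `ℝⁿ`,
where `V(A)` is the Lebesgue volume of the convex hull (Lean's convention `0/0 = 0`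
gives `σ(A) = 0` when all points coincide). -/
noncomputable def simplexStrength {n : ℕ}
    (q : Fin (n + 1) → EuclideanSpace ℝ (Fin n)) : ℝ :=
  ((MeasureTheory.volume (convexHull ℝ (Set.range q))).toReal) ^ 2 /
    (halfPerimeter q) ^ (2 * n - 1)

open scoped Pointwise

/-- The edge vectors of the simplex `q` issuing from its vertex `q 0`. -/
noncomputable def edgeVec {n : ℕ} (q : Fin (n + 1) → EuclideanSpace ℝ (Fin n)) :
    Fin n → EuclideanSpace ℝ (Fin n) :=
  fun i => q i.succ - q 0

/-- The determinant with respect to the standard basis, as a multilinear map of `n` vectors. -/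
noncomputable def stdDet (n : ℕ) :
    MultilinearMap ℝ (fun _ : Fin n => EuclideanSpace ℝ (Fin n)) ℝ :=
  (EuclideanSpace.basisFun (Fin n) ℝ).toBasis.det.toMultilinearMap

/-- The volume of the corner simplex with vertices `0, e₁, …, eₙ`. Its value `1 / n!` plays no
role. -/
noncomputable def cornerVol (n : ℕ) : ℝ :=
  (MeasureTheory.volume (convexHull ℝ (Set.range
    (Fin.cons 0 (EuclideanSpace.basisFun (Fin n) ℝ) :
      Fin (n + 1) → EuclideanSpace ℝ (Fin n))))).toReal

lemma volume_hull_eq {n : ℕ} (q : Fin (n + 1) → EuclideanSpace ℝ (Fin n)) :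
    (MeasureTheory.volume (convexHull ℝ (Set.range q))).toReal
      = |stdDet n (edgeVec q)| * cornerVol n := by
  set b := (EuclideanSpace.basisFun (Fin n) ℝ).toBasis with hb
  set L := b.constr ℝ (edgeVec q) with hL
  set s : Fin (n + 1) → EuclideanSpace ℝ (Fin n) :=
    Fin.cons 0 (EuclideanSpace.basisFun (Fin n) ℝ) with hs
  have hLb : ∀ i, L (EuclideanSpace.basisFun (Fin n) ℝ i) = edgeVec q i := by
    intro i
    have h := b.constr_basis ℝ (edgeVec q) i
    rwa [hb, OrthonormalBasis.coe_toBasis, ← hb] at h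
  have hrange : Set.range q = q 0 +ᵥ (L '' Set.range s) := by
    rw [← Set.range_comp, ← Set.image_vadd, ← Set.range_comp]
    congr 1
    ext1 i
    refine Fin.cases ?_ (fun j => ?_) i
    · simp [hs]
    · simp only [hs, Function.comp_apply, Fin.cons_succ, hLb]
      simp [edgeVec]
  have hdet : LinearMap.det L = stdDet n (edgeVec q) := by
    have h := b.det_comp L b
    have h2 : L ∘ b = edgeVec q := by
      ext1 i
      exact b.constr_basis ℝ (edgeVec q) i
    rw [h2, b.det_self, mul_one] at h
    exact h.symm
  rw [hrange, convexHull_vadd, MeasureTheory.measure_vadd, ← LinearMap.image_convexHull,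
    MeasureTheory.Measure.addHaar_image_linearMap, ENNReal.toReal_mul,
    ENNReal.toReal_ofReal (abs_nonneg _), hdet]
  rfl

lemma stdDet_bound (n : ℕ) : ∃ C : ℝ, 0 < C ∧
    ∀ v : Fin n → EuclideanSpace ℝ (Fin n), ‖stdDet n v‖ ≤ C * ∏ i, ‖v i‖ := by
  apply MultilinearMap.exists_bound_of_continuous
  have h : (fun v : Fin n → EuclideanSpace ℝ (Fin n) => stdDet n v)
      = fun v => (Matrix.of fun i j => v j i).det := by
    ext v
    change (EuclideanSpace.basisFun (Fin n) ℝ).toBasis.det v = _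
    rw [Module.Basis.det_apply]
    congr 1
  change Continuous fun v : Fin n → EuclideanSpace ℝ (Fin n) => stdDet n v
  rw [h]
  apply Continuous.matrix_det
  refine continuous_matrix fun i j => ?_
  simp only [Matrix.of_apply]
  fun_prop

lemma halfPerimeter_nonneg {n : ℕ} (q : Fin (n + 1) → EuclideanSpace ℝ (Fin n)) :
    0 ≤ halfPerimeter q := by
  unfold halfPerimeter
  positivity

lemma norm_edgeVec_le {n : ℕ} (q : Fin (n + 1) → EuclideanSpace ℝ (Fin n)) :
    ‖edgeVec q‖ ≤ 2 * halfPerimeter q := by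
  refine (pi_norm_le_iff_of_nonneg (by have := halfPerimeter_nonneg q; positivity)).2 fun i => ?_
  have h1 : dist (q 0) (q i.succ) ≤
      ∑ j ∈ Finset.univ.filter (fun j => (0 : Fin (n + 1)) < j), dist (q 0) (q j) :=
    Finset.single_le_sum (f := fun j => dist (q 0) (q j)) (fun _ _ => dist_nonneg)
      (by simp)
  have h2 : ∑ j ∈ Finset.univ.filter (fun j => (0 : Fin (n + 1)) < j), dist (q 0) (q j) ≤
      ∑ i : Fin (n + 1), ∑ j ∈ Finset.univ.filter (fun j => i < j), dist (q i) (q j) :=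
    Finset.single_le_sum
      (f := fun i : Fin (n + 1) =>
        ∑ j ∈ Finset.univ.filter (fun j => i < j), dist (q i) (q j))
      (fun _ _ => Finset.sum_nonneg fun _ _ => dist_nonneg) (Finset.mem_univ 0)
  have h3 : ‖edgeVec q i‖ = dist (q 0) (q i.succ) := by
    rw [dist_comm, dist_eq_norm]; rfl
  unfold halfPerimeter
  linarith

lemma norm_edgeVec_sub_le {n : ℕ} {ε : ℝ} (hε : 0 ≤ ε)
    {q q' : Fin (n + 1) → EuclideanSpace ℝ (Fin n)} (h : ∀ i, ‖q i - q' i‖ ≤ ε) :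
    ‖edgeVec q - edgeVec q'‖ ≤ 2 * ε := by
  refine (pi_norm_le_iff_of_nonneg (by positivity)).2 fun i => ?_
  have h1 : (edgeVec q - edgeVec q') i = (q i.succ - q' i.succ) - (q 0 - q' 0) := by
    simp only [edgeVec, Pi.sub_apply]; abel
  rw [h1]
  have h2 := norm_sub_le (q i.succ - q' i.succ) (q 0 - q' 0)
  linarith [h i.succ, h 0]

lemma halfPerimeter_sub_le {n : ℕ} {ε : ℝ} (hε : 0 ≤ ε)
    {q q' : Fin (n + 1) → EuclideanSpace ℝ (Fin n)} (h : ∀ i, ‖q i - q' i‖ ≤ ε) :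
    halfPerimeter q - halfPerimeter q' ≤ ((n : ℝ) + 1) ^ 2 * ε := by
  have hd : ∀ i j, dist (q i) (q j) - dist (q' i) (q' j) ≤ 2 * ε := by
    intro i j
    have h1 := dist_triangle4 (q i) (q' i) (q' j) (q j)
    have h2 := h i
    have h3 := h j
    rw [← dist_eq_norm] at h2 h3
    rw [dist_comm (q' j)] at h1
    linarith
  have key : ∑ i : Fin (n + 1), ∑ j ∈ Finset.univ.filter (fun j => i < j),
      (dist (q i) (q j) - dist (q' i) (q' j)) ≤ ((n : ℝ) + 1) ^ 2 * (2 * ε) := by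
    calc _ ≤ ∑ i : Fin (n + 1), ∑ j ∈ Finset.univ.filter (fun j => i < j), 2 * ε :=
          Finset.sum_le_sum fun i _ => Finset.sum_le_sum fun j _ => hd i j
      _ ≤ ∑ i : Fin (n + 1), ∑ j : Fin (n + 1), 2 * ε :=
          Finset.sum_le_sum fun i _ => Finset.sum_le_sum_of_subset_of_nonneg
            (Finset.filter_subset _ _) fun _ _ _ => by positivity
      _ = _ := by simp; ring
  simp only [Finset.sum_sub_distrib] at key
  unfold halfPerimeter
  linarith

/-- The quotient `D² / p ^ (2m+1)` is Lipschitz when `D` is of order `p ^ (m+1)` and varies by at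
most `b p ^ m ε`, while `p` drops by at most `K ε`. The case `p' = 0` is included: then `D'² / 0 = 0`. -/
lemma strength_core {m : ℕ} {a b K ε D D' p p' : ℝ} (ha : 0 ≤ a)
    (hb : 0 ≤ b) (hε : 0 ≤ ε) (hp' : 0 ≤ p') (hpp : p' ≤ p) (hD : |D| ≤ a * p ^ (m + 1)) (hD' : |D'| ≤ a * p' ^ (m + 1))
    (hDD : |D - D'| ≤ b * p ^ m * ε) (hK : p - p' ≤ K * ε) :
    |D ^ 2 / p ^ (2 * m + 1) - D' ^ 2 / p' ^ (2 * m + 1)|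
      ≤ (2 * a * b + a ^ 2 * (2 * m + 1) * K) * ε := by
  have hp : 0 ≤ p := hp'.trans hpp
  rcases hp.eq_or_lt with h0 | hp0
  · have h0' : p' = 0 := by linarith
    subst h0'
    subst h0
    have hD0 : D = 0 := by simpa using hD
    have hD0' : D' = 0 := by simpa using hD'
    have hKε : 0 ≤ K * ε := by simpa using hK
    have hbε : 0 ≤ a * (b * ε) := by positivity
    have hKε2 : 0 ≤ a ^ 2 * (2 * m + 1) * (K * ε) := by positivity
    simp only [hD0, hD0', sub_self, abs_zero]
    linarith
  have first : |D ^ 2 - D' ^ 2| / p ^ (2 * m + 1) ≤ 2 * a * b * ε := by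
    rw [div_le_iff₀ (by positivity)]
    have h1 : |D + D'| ≤ 2 * a * p ^ (m + 1) := by
      have : a * p' ^ (m + 1) ≤ a * p ^ (m + 1) := by gcongr
      linarith [abs_add_le D D']
    calc |D ^ 2 - D' ^ 2| = |D + D'| * |D - D'| := by rw [← abs_mul]; congr 1; ring
      _ ≤ (2 * a * p ^ (m + 1)) * (b * p ^ m * ε) := by gcongr
      _ = _ := by ring
  have second : |D' ^ 2 / p ^ (2 * m + 1) - D' ^ 2 / p' ^ (2 * m + 1)|
      ≤ a ^ 2 * (2 * m + 1) * (p - p') := by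
    rcases hp'.eq_or_lt with h0 | hp0'
    · subst h0
      have hD0' : D' = 0 := by simpa using hD'
      subst hD0'
      simp
      positivity
    have hsq : D' ^ 2 ≤ a ^ 2 * p' * p' ^ (2 * m + 1) := by
      calc D' ^ 2 = |D'| ^ 2 := (sq_abs _).symm
        _ ≤ (a * p' ^ (m + 1)) ^ 2 := by gcongr
        _ = _ := by ring
    have hdiv : D' ^ 2 / p' ^ (2 * m + 1) ≤ a ^ 2 * p' := by
      rwa [div_le_iff₀ (by positivity)]
    have hr0 : 0 ≤ p' / p := by positivity
    have hr1 : p' / p ≤ 1 := (div_le_one hp0).2 hpp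
    have bern := one_add_mul_le_pow (a := p' / p - 1) (by linarith) (2 * m + 1)
    rw [add_sub_cancel] at bern
    push_cast at bern
    have hpow1 : (p' / p) ^ (2 * m + 1) ≤ 1 := pow_le_one₀ hr0 hr1
    have heq : D' ^ 2 / p ^ (2 * m + 1) - D' ^ 2 / p' ^ (2 * m + 1)
        = -(D' ^ 2 / p' ^ (2 * m + 1) * (1 - (p' / p) ^ (2 * m + 1))) := by
      rw [div_pow]; field_simp; ring
    rw [heq, abs_neg, abs_of_nonneg (mul_nonneg (by positivity) (by linarith))]
    calc _ ≤ (a ^ 2 * p') * ((2 * m + 1) * (1 - p' / p)) := by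
          gcongr
          linarith
      _ = a ^ 2 * (2 * m + 1) * ((p' / p) * (p - p')) := by field_simp
      _ ≤ a ^ 2 * (2 * m + 1) * (1 * (p - p')) := by
          have : 0 ≤ p - p' := by linarith
          gcongr
      _ = _ := by ring
  have hsplit : D ^ 2 / p ^ (2 * m + 1) - D' ^ 2 / p' ^ (2 * m + 1)
      = (D ^ 2 - D' ^ 2) / p ^ (2 * m + 1)
        + (D' ^ 2 / p ^ (2 * m + 1) - D' ^ 2 / p' ^ (2 * m + 1)) := by ring
  have h2 : a ^ 2 * (2 * m + 1) * (p - p') ≤ a ^ 2 * (2 * m + 1) * (K * ε) := by gcongr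
  rw [hsplit]
  refine (abs_add_le _ _).trans ?_
  rw [abs_div, abs_of_pos (show 0 < p ^ (2 * m + 1) by positivity)]
  linarith

/-- the strength of a simplex is Lipschitz continuous under
perturbations of its vertices. -/
theorem stmt_5 (n : ℕ) (hn : 1 ≤ n) :
    ∃ lam : ℝ, 0 < lam ∧ ∀ ε : ℝ, 0 ≤ ε →
      ∀ q q' : Fin (n + 1) → EuclideanSpace ℝ (Fin n),
        (∀ i, ‖q i - q' i‖ ≤ ε) →
        |simplexStrength q' - simplexStrength q| ≤ 2 * lam * ε := by
  obtain ⟨m, rfl⟩ : ∃ m, n = m + 1 := ⟨n - 1, by omega⟩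
  obtain ⟨C, hC, hbound⟩ := stdDet_bound (m + 1)
  set a : ℝ := C * 2 ^ (m + 1) with ha
  set b : ℝ := C * (m + 1) * 2 ^ (m + 1) with hb
  set K : ℝ := ((m : ℝ) + 2) ^ 2 with hK
  set M : ℝ := 2 * a * b + a ^ 2 * (2 * m + 1) * K with hM
  have ha0 : 0 ≤ a := by positivity
  have hb0 : 0 ≤ b := by positivity
  have hM0 : 0 < M := by positivity
  have hsigma : ∀ q : Fin (m + 1 + 1) → EuclideanSpace ℝ (Fin (m + 1)), simplexStrength q =
      cornerVol (m + 1) ^ 2 *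
        ((stdDet (m + 1) (edgeVec q)) ^ 2 / halfPerimeter q ^ (2 * m + 1)) := by
    intro q
    unfold simplexStrength
    rw [volume_hull_eq, mul_pow, sq_abs, show 2 * (m + 1) - 1 = 2 * m + 1 by omega]
    ring
  have hsize : ∀ q : Fin (m + 1 + 1) → EuclideanSpace ℝ (Fin (m + 1)),
      |stdDet (m + 1) (edgeVec q)| ≤ a * halfPerimeter q ^ (m + 1) := by
    intro q
    calc |stdDet (m + 1) (edgeVec q)| ≤ C * ∏ i, ‖edgeVec q i‖ := hbound _
      _ ≤ C * ∏ _i : Fin (m + 1), (2 * halfPerimeter q) := by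
          gcongr with i
          exact (norm_le_pi_norm _ i).trans (norm_edgeVec_le q)
      _ = _ := by simp [ha, mul_pow]; ring
  -- The two simplices enter symmetrically, so the one with the larger half-perimeter may be `q`.
  have main : ∀ ε : ℝ, 0 ≤ ε → ∀ q q' : Fin (m + 1 + 1) → EuclideanSpace ℝ (Fin (m + 1)),
      (∀ i, ‖q i - q' i‖ ≤ ε) → halfPerimeter q' ≤ halfPerimeter q →
      |simplexStrength q - simplexStrength q'| ≤ cornerVol (m + 1) ^ 2 * (M * ε) := by
    intro ε hε q q' h hpp
    have hdiff : |stdDet (m + 1) (edgeVec q) - stdDet (m + 1) (edgeVec q')|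
        ≤ b * halfPerimeter q ^ m * ε := by
      have h1 := MultilinearMap.norm_image_sub_le_of_bound (stdDet (m + 1)) hC.le hbound
        (edgeVec q) (edgeVec q')
      have h2 : max ‖edgeVec q‖ ‖edgeVec q'‖ ≤ 2 * halfPerimeter q :=
        max_le (norm_edgeVec_le q) ((norm_edgeVec_le q').trans (by linarith))
      have h0 : 0 ≤ max ‖edgeVec q‖ ‖edgeVec q'‖ := le_max_of_le_left (norm_nonneg _)
      have hq := halfPerimeter_nonneg q
      rw [Fintype.card_fin, Nat.add_sub_cancel, Real.norm_eq_abs] at h1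
      calc _ ≤ _ := h1
        _ ≤ C * ((m + 1 : ℕ) : ℝ) * (2 * halfPerimeter q) ^ m * (2 * ε) := by
            gcongr
            exact norm_edgeVec_sub_le hε h
        _ = _ := by simp only [hb, mul_pow]; push_cast; ring
    have hper : halfPerimeter q - halfPerimeter q' ≤ K * ε := by
      have h1 := halfPerimeter_sub_le hε h
      have h2 : ((m + 1 : ℕ) : ℝ) + 1 = m + 2 := by push_cast; ring
      rwa [h2] at h1
    have h3 := strength_core ha0 hb0 hε (halfPerimeter_nonneg q') hpp (hsize q) (hsize q') hdiff
      hper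
    rw [hsigma, hsigma, ← mul_sub, abs_mul, abs_of_nonneg (sq_nonneg (cornerVol (m + 1)))]
    gcongr
  refine ⟨cornerVol (m + 1) ^ 2 * M + 1, by positivity, fun ε hε q q' h => ?_⟩
  have hfin : |simplexStrength q' - simplexStrength q| ≤ cornerVol (m + 1) ^ 2 * (M * ε) := by
    rcases le_total (halfPerimeter q') (halfPerimeter q) with hpp | hpp
    · rw [abs_sub_comm]
      exact main ε hε q q' h hpp
    · exact main ε hε q' q (fun i => by rw [norm_sub_rev]; exact h i) hpp
  have : 0 ≤ cornerVol (m + 1) ^ 2 * M * ε := by positivity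
  nlinarith
end

section
/- The density functions of the periodic sequence S satisfy the periodicity ψ_{k+m}(t + 1/2) = ψ_k(t) for every integer k ≥ 0 and every t ≥ 0, and the symmetry ψ_{m−k}(1/2 − t) = ψ_k(t) for every integer k with 0 ≤ k ≤ ⌊m/2⌋ and every t ∈ [0, 1/2]. -/
/-!
Let `N(x, t)` be the number of points of `S` in `[x - t, x + t]`. Splitting `S` into the
translates `p i + ℤ` gives, for `t ≥ 0`,
`N(x, t) = ∑ i, (⌊x + t - p i⌋ + 1 - ⌈x - t - p i⌉)` (`ncard_eq_pointCount`).

From this formula `N(·, t)` is measurable and has period 1, and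
`N(x + 1/2, t + 1/2) = N(x, t) + m`, because the new window is `[x - t, x + t + 1]`.
Similarly the window of `N(x + 1/2, 1/2 - t)` is `[x + t, x + 1 - t]`, which together with
`[x - t, x + t]` covers one full period, so that `N(x + 1/2, 1/2 - t) = m - N(x, t)` unless `x - t`
or `x + t` lies in the countable set `S`. The two identities pass to the measures because
translating a 1-periodic set by `1/2` does not change the measure of its part in `[0, 1)`
(`volume_shift`).
-/

open MeasureTheory

/-- The periodic point set `S = {p_i + j : 1 ≤ i ≤ m, j ∈ ℤ} ⊂ ℝ`
with period 1 and motif `p₁, …, p_m`. -/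
def periodicSet {m : ℕ} (p : Fin m → ℝ) : Set ℝ :=
  {x | ∃ (i : Fin m) (j : ℤ), x = p i + j}

/-- The `k`-th density function `ψ_k(t)`: the Lebesgue measure of the set of
`x ∈ [0,1)` such that exactly `k` points `s ∈ S` satisfy `|x − s| ≤ t`. -/
noncomputable def densityFn {m : ℕ} (p : Fin m → ℝ) (k : ℕ) (t : ℝ) : ℝ :=
  (volume {x ∈ Set.Ico (0 : ℝ) 1 |
    ({s ∈ periodicSet p | |x - s| ≤ t}).ncard = k}).toReal

/-- The gaps `d_i = p_{i+1} − p_i` (with `p_{m+1} = p₁ + 1`), indices modulo `m`. -/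
noncomputable def gap {m : ℕ} [NeZero m] (p : Fin m → ℝ) (i : Fin m) : ℝ :=
  p (i + 1) - p i + (if (i : ℕ) + 1 = m then 1 else 0)

/-- The number of points of `periodicSet p` in `[x - t, x + t]` (when `t ≥ 0`), as a sum of the
contributions of the translates `p i + ℤ`. -/
noncomputable def pointCount {m : ℕ} (p : Fin m → ℝ) (t x : ℝ) : ℤ :=
  ∑ i, (⌊x + t - p i⌋ + 1 - ⌈x - t - p i⌉)

/-- The points `p i + j` are pairwise distinct, as the `p i` are distinct in `[0, 1)`. -/
lemma point_injective {m : ℕ} (p : Fin m → ℝ)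
    (hp0 : ∀ i, 0 ≤ p i) (hp1 : ∀ i, p i < 1) (hmono : StrictMono p) :
    Function.Injective (fun q : (_ : Fin m) × ℤ => p q.1 + (q.2 : ℝ)) := by
  rintro ⟨i, j⟩ ⟨i', j'⟩ h
  have h : p i + (j : ℝ) = p i' + (j' : ℝ) := h
  have hfloor : ∀ (i : Fin m) (j : ℤ), ⌊p i + (j : ℝ)⌋ = j := fun i j => by
    rw [Int.floor_add_intCast, Int.floor_eq_zero_iff.2 ⟨hp0 i, hp1 i⟩, zero_add]
  have hj : j = j' := by rw [← hfloor i j, h, hfloor]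
  subst hj
  have hi : i = i' := hmono.injective (by linarith)
  rw [hi]

lemma ncard_eq_pointCount {m : ℕ} (p : Fin m → ℝ)
    (hp0 : ∀ i, 0 ≤ p i) (hp1 : ∀ i, p i < 1) (hmono : StrictMono p)
    {t : ℝ} (ht : 0 ≤ t) (x : ℝ) :
    (({s ∈ periodicSet p | |x - s| ≤ t}).ncard : ℤ) = pointCount p t x := by
  have hset : {s ∈ periodicSet p | |x - s| ≤ t} =
      (fun q : (_ : Fin m) × ℤ => p q.1 + (q.2 : ℝ)) ''
        ((Finset.univ.sigma fun i => Finset.Icc ⌈x - t - p i⌉ ⌊x + t - p i⌋ :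
          Finset ((_ : Fin m) × ℤ)) : Set ((_ : Fin m) × ℤ)) := by
    ext s
    simp only [Set.mem_image, Finset.mem_coe, Finset.mem_sigma, Finset.mem_univ, true_and,
      Finset.mem_Icc, Int.ceil_le, Int.le_floor, abs_le, Set.mem_ofPred_eq]
    constructor
    · rintro ⟨⟨i, j, rfl⟩, h1, h2⟩
      exact ⟨⟨i, j⟩, ⟨by dsimp only; linarith, by dsimp only; linarith⟩, rfl⟩
    · rintro ⟨⟨i, j⟩, ⟨h1, h2⟩, rfl⟩
      dsimp only at h1 h2 ⊢
      exact ⟨⟨i, j, rfl⟩, by linarith, by linarith⟩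
  rw [hset, Set.ncard_image_of_injective _ (point_injective p hp0 hp1 hmono),
    Set.ncard_coe_finset, Finset.card_sigma, pointCount]
  push_cast
  refine Finset.sum_congr rfl fun i _ => ?_
  rw [Int.card_Icc, Int.toNat_of_nonneg]
  -- `t ≥ 0` ensures that the difference of floor and ceiling is not truncated.
  have : ⌈x - t - p i⌉ ≤ ⌊x + t - p i⌋ + 1 := by
    rw [Int.ceil_le]
    push_cast
    linarith [Int.lt_floor_add_one (x + t - p i)]
  lia

lemma densityFn_eq {m : ℕ} (p : Fin m → ℝ)
    (hp0 : ∀ i, 0 ≤ p i) (hp1 : ∀ i, p i < 1) (hmono : StrictMono p)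
    {t : ℝ} (ht : 0 ≤ t) (k : ℕ) :
    densityFn p k t = (volume ({x | pointCount p t x = k} ∩ Set.Ico (0 : ℝ) 1)).toReal := by
  unfold densityFn
  congr 2
  ext x
  simp only [Set.mem_inter_iff, Set.mem_ofPred_eq,
    ← ncard_eq_pointCount p hp0 hp1 hmono ht x, Nat.cast_inj]
  tauto

lemma measurable_pointCount {m : ℕ} (p : Fin m → ℝ) (t : ℝ) : Measurable (pointCount p t) := by
  unfold pointCount
  refine Finset.measurable_fun_sum _ fun i _ => ?_
  exact ((Int.measurable_floor.comp (by fun_prop : Measurable fun x : ℝ => x + t - p i)).add_const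
    1).sub (Int.measurable_ceil.comp (by fun_prop : Measurable fun x : ℝ => x - t - p i))

lemma pointCount_add_one {m : ℕ} (p : Fin m → ℝ) (t x : ℝ) :
    pointCount p t (x + 1) = pointCount p t x := by
  unfold pointCount
  refine Finset.sum_congr rfl fun i _ => ?_
  rw [show x + 1 + t - p i = x + t - p i + 1 by ring,
    show x + 1 - t - p i = x - t - p i + 1 by ring, Int.floor_add_one, Int.ceil_add_one]
  ring

lemma pointCount_shift {m : ℕ} (p : Fin m → ℝ) (t x : ℝ) :
    pointCount p (t + 1 / 2) (x + 1 / 2) = pointCount p t x + m := by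
  unfold pointCount
  have hm : (m : ℤ) = ∑ _i : Fin m, 1 := by simp
  rw [hm, ← Finset.sum_add_distrib]
  refine Finset.sum_congr rfl fun i _ => ?_
  rw [show x + 1 / 2 + (t + 1 / 2) - p i = x + t - p i + 1 by ring,
    show x + 1 / 2 - (t + 1 / 2) - p i = x - t - p i by ring, Int.floor_add_one]
  ring

lemma ceil_eq_floor_add_one {y : ℝ} (h : ∀ j : ℤ, y ≠ j) : ⌈y⌉ = ⌊y⌋ + 1 := by
  rw [Int.ceil_eq_iff]
  push_cast
  exact ⟨by linarith [lt_of_le_of_ne (Int.floor_le y) (h ⌊y⌋).symm], (Int.lt_floor_add_one y).le⟩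

lemma pointCount_reflect {m : ℕ} (p : Fin m → ℝ) (t x : ℝ)
    (h1 : x - t ∉ periodicSet p) (h2 : x + t ∉ periodicSet p) :
    pointCount p (1 / 2 - t) (x + 1 / 2) = m - pointCount p t x := by
  unfold pointCount
  have hm : (m : ℤ) = ∑ _i : Fin m, 1 := by simp
  rw [hm, ← Finset.sum_sub_distrib]
  refine Finset.sum_congr rfl fun i _ => ?_
  rw [show x + 1 / 2 + (1 / 2 - t) - p i = x - t - p i + 1 by ring,
    show x + 1 / 2 - (1 / 2 - t) - p i = x + t - p i by ring, Int.floor_add_one,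
    ceil_eq_floor_add_one (y := x - t - p i) fun j hj => h1 ⟨i, j, by linarith⟩,
    ceil_eq_floor_add_one (y := x + t - p i) fun j hj => h2 ⟨i, j, by linarith⟩]
  ring

lemma countable_periodicSet {m : ℕ} (p : Fin m → ℝ) : (periodicSet p).Countable := by
  refine (Set.countable_range fun q : Fin m × ℤ => p q.1 + (q.2 : ℝ)).mono ?_
  rintro x ⟨i, j, rfl⟩
  exact ⟨(i, j), rfl⟩

/-- The points `x` for which an end of the window `[x - t, x + t]` hits `S` form a null set. -/
lemma ae_endpoints {m : ℕ} (p : Fin m → ℝ) (t : ℝ) :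
    ∀ᵐ x : ℝ, x - t ∉ periodicSet p ∧ x + t ∉ periodicSet p := by
  have h1 : ((fun x => x - t) ⁻¹' periodicSet p).Countable :=
    (countable_periodicSet p).preimage (sub_left_injective (b := t))
  have h2 : ((fun x => x + t) ⁻¹' periodicSet p).Countable :=
    (countable_periodicSet p).preimage (add_left_injective t)
  filter_upwards [h1.ae_notMem volume, h2.ae_notMem volume] with x hx1 hx2
  exact ⟨hx1, hx2⟩

/-- Translating a measurable 1-periodic set does not change the measure of its part in `[0, 1)`:
every interval of length 1 is a fundamental domain for `ℤ`. -/
lemma volume_shift {A : Set ℝ} (hA : MeasurableSet A) (hper : ∀ x, x + 1 ∈ A ↔ x ∈ A) (a : ℝ) :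
    volume (((fun x => x + a) ⁻¹' A) ∩ Set.Ico (0 : ℝ) 1) = volume (A ∩ Set.Ico (0 : ℝ) 1) := by
  have hpre : ((fun x => x + a) ⁻¹' A) ∩ Set.Ico (0 : ℝ) 1 =
      (fun x => x + a) ⁻¹' (A ∩ Set.Ico a (a + 1)) := by
    ext x
    simp only [Set.mem_inter_iff, Set.mem_preimage, Set.mem_Ico]
    constructor
    · rintro ⟨h, h1, h2⟩
      exact ⟨h, by linarith, by linarith⟩
    · rintro ⟨h, h1, h2⟩
      exact ⟨h, by linarith, by linarith⟩
  have hIoc : ∀ b : ℝ, volume (A ∩ Set.Ico b (b + 1)) = volume (A ∩ Set.Ioc b (b + 1)) :=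
    fun b => measure_congr ((ae_eq_refl A).inter Ico_ae_eq_Ioc)
  have hz : ∀ (n : ℤ) (x : ℝ), x + n ∈ A ↔ x ∈ A := by
    intro n
    induction n using Int.induction_on with
    | zero => simp
    | succ n ih =>
      intro x
      rw [← ih x, ← hper (x + ((n : ℤ) : ℝ))]
      push_cast
      rw [add_assoc]
    | pred n ih =>
      intro x
      rw [← ih x, ← hper]
      push_cast
      ring_nf
  rw [hpre, measure_preimage_add_right, hIoc]
  have h0 := hIoc 0
  rw [zero_add] at h0
  rw [h0]
  have key := (isAddFundamentalDomain_Ioc (zero_lt_one' ℝ) a volume).measure_set_eq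
    (isAddFundamentalDomain_Ioc (zero_lt_one' ℝ) 0 volume) hA (fun g => by
      obtain ⟨g, hg⟩ := g
      obtain ⟨n, rfl⟩ := AddSubgroup.mem_zmultiples_iff.1 hg
      ext x
      simp only [Set.mem_preimage, AddSubgroup.mk_vadd, vadd_eq_add, zsmul_eq_mul, mul_one]
      rw [add_comm]
      exact hz n x)
  simpa using key

/-- periodicity `ψ_{k+m}(t + 1/2) = ψ_k(t)` and symmetry
`ψ_{m−k}(1/2 − t) = ψ_k(t)` of the density functions. -/
theorem stmt_14 {m : ℕ} [NeZero m] (p : Fin m → ℝ)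
    (hp0 : ∀ i, 0 ≤ p i) (hp1 : ∀ i, p i < 1) (hmono : StrictMono p) :
    (∀ k : ℕ, ∀ t : ℝ, 0 ≤ t →
      densityFn p (k + m) (t + 1 / 2) = densityFn p k t) ∧
    (∀ k : ℕ, k ≤ m / 2 → ∀ t ∈ Set.Icc (0 : ℝ) (1 / 2),
      densityFn p (m - k) (1 / 2 - t) = densityFn p k t) := by
  have hshift : ∀ (k : ℕ) (t : ℝ),
      volume (((fun x => x + 1 / 2) ⁻¹' {x | pointCount p t x = k}) ∩ Set.Ico (0 : ℝ) 1) =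
        volume ({x | pointCount p t x = k} ∩ Set.Ico (0 : ℝ) 1) := fun k t =>
    volume_shift (measurable_pointCount p t (measurableSet_singleton (k : ℤ)))
      (fun x => by
        change pointCount p t (x + 1) = k ↔ pointCount p t x = k
        rw [pointCount_add_one]) _
  refine ⟨fun k t ht => ?_, fun k hk t ht => ?_⟩
  · rw [densityFn_eq p hp0 hp1 hmono (by linarith), densityFn_eq p hp0 hp1 hmono ht, ← hshift]
    congr 3
    ext x
    simp only [Set.mem_preimage, Set.mem_ofPred_eq, pointCount_shift]
    push_cast
    exact add_left_inj _
  · rw [densityFn_eq p hp0 hp1 hmono (by linarith [ht.2]), densityFn_eq p hp0 hp1 hmono ht.1,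
      ← hshift]
    congr 1
    refine measure_congr (Filter.EventuallyEq.inter ?_ (ae_eq_refl _))
    refine Filter.eventuallyEq_set.2 ?_
    filter_upwards [ae_endpoints p t] with x hx
    simp only [Set.mem_preimage, Set.mem_ofPred_eq, pointCount_reflect p t x hx.1 hx.2]
    lia
end

section
/- Let S, Q ⊆ ℝ^n, let p ∈ S, q ∈ Q, and let α > β > 0. Assume that the symmetry groups stabilise, Sym(S,p;α−β) = Sym(S,p;α), and that there exists g ∈ O(n) with g(C(S,p;α)) = C(Q,q;α). Then every f ∈ O(n) satisfying f(C(S,p;α−β)) = C(Q,q;α−β) also satisfies f(C(S,p;α)) = C(Q,q;α). -/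
/-! Let `g` match the `α`-clusters. Orthogonal maps preserve the norm, and the `(α - β)`-cluster is
the part of the `α`-cluster in the closed ball of radius `α - β` (`cluster_eq_inter`), so `g` also
matches the `(α - β)`-clusters. Hence if `f` matches the `(α - β)`-clusters, then `g⁻¹ ∘ f` is a
symmetry of the `(α - β)`-cluster of `p`, by stabilisation also of its `α`-cluster, and
`f = g ∘ (g⁻¹ ∘ f)` matches the `α`-clusters. -/

/-- The local `r`-cluster `C(S,p;r) = {s − p : s ∈ S, ‖s − p‖ ≤ r}`. -/
def cluster {n : ℕ} (S : Set (EuclideanSpace ℝ (Fin n)))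
    (p : EuclideanSpace ℝ (Fin n)) (r : ℝ) : Set (EuclideanSpace ℝ (Fin n)) :=
  {y | ∃ s ∈ S, ‖s - p‖ ≤ r ∧ y = s - p}

theorem cluster_eq_inter {n : ℕ} (S : Set (EuclideanSpace ℝ (Fin n)))
    (p : EuclideanSpace ℝ (Fin n)) {r R : ℝ} (hrR : r ≤ R) :
    cluster S p r = cluster S p R ∩ Metric.closedBall 0 r := by
  ext y
  simp only [cluster, Set.mem_ofPred_eq, Set.mem_inter_iff, mem_closedBall_zero_iff]
  constructor
  · rintro ⟨s, hs, hr, rfl⟩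
    exact ⟨⟨s, hs, hr.trans hrR, rfl⟩, hr⟩
  · rintro ⟨⟨s, hs, -, rfl⟩, hr⟩
    exact ⟨s, hs, hr, rfl⟩

/-- local extension. If the symmetry groups of the cluster of `p`
stabilise between radii `α−β` and `α`, and some orthogonal map takes the
`α`-cluster of `p` to the `α`-cluster of `q`, then every orthogonal map matching
the `(α−β)`-clusters also matches the `α`-clusters. -/
theorem stmt_19 {n : ℕ} (S Q : Set (EuclideanSpace ℝ (Fin n)))
    (p q : EuclideanSpace ℝ (Fin n)) (hp : p ∈ S) (hq : q ∈ Q)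
    (α β : ℝ) (hβ : 0 < β) (hαβ : β < α)
    (hsym : ∀ h : EuclideanSpace ℝ (Fin n) ≃ₗᵢ[ℝ] EuclideanSpace ℝ (Fin n),
      h '' cluster S p (α - β) = cluster S p (α - β) ↔
      h '' cluster S p α = cluster S p α)
    (hg : ∃ g : EuclideanSpace ℝ (Fin n) ≃ₗᵢ[ℝ] EuclideanSpace ℝ (Fin n),
      g '' cluster S p α = cluster Q q α) :
    ∀ f : EuclideanSpace ℝ (Fin n) ≃ₗᵢ[ℝ] EuclideanSpace ℝ (Fin n),
      f '' cluster S p (α - β) = cluster Q q (α - β) →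
      f '' cluster S p α = cluster Q q α := by
  obtain ⟨g, hg⟩ := hg
  intro f hf
  have hg' : g '' cluster S p (α - β) = cluster Q q (α - β) := by
    rw [cluster_eq_inter S p (by linarith : α - β ≤ α),
      cluster_eq_inter Q q (by linarith : α - β ≤ α), Set.image_inter g.injective, hg,
      g.image_closedBall, map_zero]
  have hsymm : (f.trans g.symm) '' cluster S p α = cluster S p α := by
    rw [← hsym, LinearIsometryEquiv.coe_trans, Set.image_comp, hf, ← hg', ← Set.image_comp]
    simp
  calc f '' cluster S p α = g '' ((f.trans g.symm) '' cluster S p α) := by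
        rw [← Set.image_comp]
        congr 1
        ext1 x
        simp
    _ = cluster Q q α := by rw [hsymm, hg]
end
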